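/- In the setting of Ulam's method for the approximating maps τ_n, fix n ≥ N with a_n + D₁ < 1, and for each k ≥ 1 let f_{n,k} be a normalized fixed point of the Ulam operator P^{(k)}_{τ_n}. Then sup_k ess sup f_{n,k} ≤ D/(1 − (a_n + D₁)) < ∞, so the sequence (f_{n,k})_{k≥1} is weakly pre-compact in L¹(I,λ); and if a subsequence f_{n,k_j} converges weakly in L¹ to f (meaning ∫₀¹ g·f_{n,k_j} dλ → ∫₀¹ g·f dλ for every g ∈ L^∞(I,λ)) as k_j → ∞, then f is a fixed point of P_{τ_n}, i.e., the measure f·λ is τ_n-invariant. -/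

import Mathlib

open MeasureTheory Set Filter

/-- Lebesgue measure on the unit interval `I = [0,1]`. -/
noncomputable def lam : MeasureTheory.Measure ℝ := MeasureTheory.volume.restrict (Set.Icc 0 1)

/-- A piecewise convex map `τ` on `[0,1]` with countably many branches, whose partition
points form a strictly decreasing sequence `1 = a 0 > a 1 > ⋯` tending to `0`; on each
`[a (m+1), a m)` the map is continuous, convex and differentiable, vanishes at the left
endpoint, and has right derivative `d (m+1) = τ'(a (m+1)) > 0` there; there is `N ≥ 1`
with `D₁ = ∑_{m=N+1}^∞ 1/τ'(a m) < 1` and `C = ∑_{m=1}^∞ 1/τ'(a m) < ∞`. -/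
structure PCApprox (τ : ℝ → ℝ) (a d : ℕ → ℝ) (N : ℕ) : Prop where
  mapsTo : Set.MapsTo τ (Set.Icc 0 1) (Set.Icc 0 1)
  a_zero : a 0 = 1
  a_anti : StrictAnti a
  a_lim : Filter.Tendsto a Filter.atTop (nhds 0)
  cont : ∀ m : ℕ, ContinuousOn τ (Set.Ico (a (m+1)) (a m))
  conv : ∀ m : ℕ, ConvexOn ℝ (Set.Ico (a (m+1)) (a m)) τ
  diff : ∀ m : ℕ, ∀ x ∈ Set.Ico (a (m+1)) (a m),
    DifferentiableWithinAt ℝ τ (Set.Ico (a (m+1)) (a m)) x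
  map_a : ∀ m : ℕ, τ (a (m+1)) = 0
  deriv_a : ∀ m : ℕ, HasDerivWithinAt τ (d (m+1)) (Set.Ici (a (m+1))) (a (m+1))
  d_pos : ∀ m : ℕ, 0 < d (m+1)
  N_pos : 1 ≤ N
  sum_d : Summable fun m => 1 / d (m+1)
  D₁_lt : (∑' m : ℕ, 1 / d (m + N + 1)) < 1

/-- `D₁ = ∑_{m=N+1}^∞ 1/τ'(a m)`. -/
noncomputable def D₁ (d : ℕ → ℝ) (N : ℕ) : ℝ := ∑' m : ℕ, 1 / d (m + N + 1)

/-- `C = ∑_{m=1}^∞ 1/τ'(a m)`. -/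
noncomputable def Cconst (d : ℕ → ℝ) : ℝ := ∑' m : ℕ, 1 / d (m + 1)

/-- `D = ∑_{m=1}^N 1/(a m · τ'(a m))`. -/
noncomputable def Dconst (a d : ℕ → ℝ) (N : ℕ) : ℝ :=
  ∑ m ∈ Finset.range N, 1 / (a (m+1) * d (m+1))

/-- The approximating map `τ_n`: `τ_n x = x / a n` for `x < a n`, and `τ_n x = τ x`
for `a n ≤ x`. -/
noncomputable def tauN (τ : ℝ → ℝ) (a : ℕ → ℝ) (n : ℕ) : ℝ → ℝ :=
  fun x => if x < a n then x / a n else τ x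

/-- Essential supremum (with respect to `λ` on `[0,1]`) of a real function, valued in `ℝ≥0∞`. -/
noncomputable def esssup (f : ℝ → ℝ) : ENNReal := essSup (fun x => ENNReal.ofReal (f x)) lam

/-- The `i`-th Ulam interval `J_{i+1} = [i/k, (i+1)/k)` of the uniform partition of `[0,1]`
into `k` subintervals. -/
noncomputable def Jint (k i : ℕ) : Set ℝ := Set.Ico ((i : ℝ) / k) (((i : ℝ) + 1) / k)

/-- The Ulam projection `Q^{(k)} f = ∑_{i=1}^k (k ∫_{J_i} f dλ) · χ_{J_i}` onto functions
constant on the elements of the uniform partition into `k` subintervals. -/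
noncomputable def Qk (k : ℕ) (f : ℝ → ℝ) : ℝ → ℝ := fun x =>
  ∑ i ∈ Finset.range k,
    Set.indicator (Jint k i) (fun _ => (k : ℝ) * ∫ y in Jint k i, f y ∂lam) x

/-- `fnk` is a normalized fixed point of the Ulam operator `P^{(k)}_σ = Q^{(k)} ∘ P_σ`:
it is constant on each `J_i`, non-negative, of integral `1`, and `Q^{(k)} (P_σ fnk) = fnk`
`λ`-a.e. (where the Frobenius–Perron image `P_σ fnk` is realized by a version `g`). -/
def IsUlamFixed (σ : ℝ → ℝ) (k : ℕ) (fnk : ℝ → ℝ) : Prop :=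
  MeasureTheory.Integrable fnk lam ∧
  (∀ i : ℕ, i < k → ∀ x ∈ Jint k i, ∀ y ∈ Jint k i, fnk x = fnk y) ∧
  (∀ x ∈ Set.Icc (0:ℝ) 1, 0 ≤ fnk x) ∧
  (∫ x, fnk x ∂lam) = 1 ∧
  ∃ g : ℝ → ℝ, MeasureTheory.Integrable g lam ∧
    (∀ A : Set ℝ, MeasurableSet A → A ⊆ Set.Icc (0:ℝ) 1 →
      ∫ x in A, g x ∂lam = ∫ x in σ ⁻¹' A, fnk x ∂lam) ∧
    Qk k g =ᵐ[lam] fnk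

/-!
An antitone density on `[0, 1)` has an antitone image under a map whose branches are increasing,
convex and vanish at their left endpoints, because the preimages of consecutive cells under a
convex branch get shorter and move to the right. So the Ulam operator preserves the compact convex
set of antitone step densities and has a fixed point `v` there (Markov–Kakutani). Evaluating the
fixed point equation on the first cell, where a branch starting at `p` with slope `e` contributes
at most `v(p) / e`, and using `v(p) ≤ min (1 / p) (v 0)`, gives
`v 0 ≤ D + (a n + D₁) * v 0`.

Every other normalized fixed density `w` equals `v`: exchanging the two if necessary,
`u = v - w` is nonnegative on the first cell. Positivity and mass conservation make `|u|` fixed, so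
`|u| - u` is a fixed nonnegative vector vanishing on the first cell, and its support is a forward
invariant set at positive distance from `0`. No interval fits into such a set: an interval
containing the left endpoint of a branch is mapped onto a neighbourhood of `0`, and otherwise
convexity makes its length relative to its distance from `0` grow at a uniform rate. Hence `u` is
nonnegative of total mass zero.

A fixed step density bounded by `M` and its push-forward give the same mass to every cell, so their
distribution functions differ by at most `M / k`; the difference disappears in a weak limit.
-/

open scoped Topology

theorem exists_mem_apply_eq_self_of_isCompact_of_convex {E : Type*} [NormedAddCommGroup E]
    [NormedSpace ℝ E] (L : E →L[ℝ] E) {K : Set E} (hK : IsCompact K) (hconv : Convex ℝ K)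
    (hne : K.Nonempty) (hmaps : MapsTo L K K) : ∃ x ∈ K, L x = x := by
  obtain ⟨u, hu⟩ := hne
  let avg (n : ℕ) : E := birkhoffAverage ℝ L id (n + 1) u
  have iterate_mem (j : ℕ) : L^[j] u ∈ K := hmaps.iterate j hu
  have avg_mem (n : ℕ) : avg n ∈ K := by
    simp only [avg, birkhoffAverage, birkhoffSum, Finset.smul_sum]
    refine hconv.sum_mem (fun _ _ => by positivity) ?_ fun j _ => iterate_mem j
    rw [Finset.sum_const, Finset.card_range, nsmul_eq_mul]
    exact mul_inv_cancel₀ (by positivity)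
  have map_avg (n : ℕ) : L (avg n) = birkhoffAverage ℝ L id (n + 1) (L u) := by
    simp only [avg, birkhoffAverage, birkhoffSum, map_smul, map_sum, id,
      ← Function.iterate_succ_apply, Function.iterate_succ_apply']
  have almost_fixed : Tendsto (fun n => L (avg n) - avg n) atTop (𝓝 0) := by
    simp only [map_avg, avg]
    refine (tendsto_birkhoffAverage_apply_sub_birkhoffAverage ℝ
      (hK.isBounded.subset ?_)).comp (tendsto_add_atTop_nat 1)
    exact range_subset_iff.2 iterate_mem
  obtain ⟨x, hx, φ, hφ, hlim⟩ := hK.tendsto_subseq avg_mem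
  refine ⟨x, hx, sub_eq_zero.1 <| tendsto_nhds_unique ?_ (almost_fixed.comp hφ.tendsto_atTop)⟩
  exact ((L.continuous.tendsto x).comp hlim).sub hlim

section PositiveOperator

variable {ι : Type*} [Fintype ι] {L : (ι → ℝ) →ₗ[ℝ] (ι → ℝ)}

theorem map_abs_eq_self_of_map_eq_self (hpos : ∀ v, 0 ≤ v → 0 ≤ L v)
    (hsum : ∀ v, ∑ i, L v i = ∑ i, v i) {u : ι → ℝ} (hu : L u = u) : L |u| = |u| := by
  have le_map : |u| ≤ L |u| := by
    refine abs_le'.2 ⟨?_, ?_⟩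
    · have := hpos (|u| - u) (sub_nonneg.2 (le_abs_self u))
      rwa [map_sub, hu, sub_nonneg] at this
    · have := hpos (|u| - -u) (sub_nonneg.2 (neg_le_abs u))
      rwa [map_sub, map_neg, hu, sub_nonneg] at this
  funext i
  exact (((Finset.sum_eq_sum_iff_of_le fun i _ => le_map i).1 (hsum |u|).symm)
    i (Finset.mem_univ i)).symm

theorem eq_of_map_eq_self_of_sum_eq (hpos : ∀ v, 0 ≤ v → 0 ≤ L v)
    (hsum : ∀ v, ∑ i, L v i = ∑ i, v i) {o : ι}
    (hirr : ∀ w, 0 ≤ w → L w = w → w o = 0 → w = 0) {v w : ι → ℝ} (hv : L v = v)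
    (hw : L w = w) (hvw : ∑ i, v i = ∑ i, w i) : v = w := by
  wlog hle : w o ≤ v o generalizing v w
  · exact (this hw hv hvw.symm (le_of_not_ge hle)).symm
  have hfixed : L (v - w) = v - w := by rw [map_sub, hv, hw]
  have abs_eq : |v - w| = v - w := by
    refine sub_eq_zero.1 (hirr _ (sub_nonneg.2 (le_abs_self _)) ?_ ?_)
    · rw [map_sub, map_abs_eq_self_of_map_eq_self hpos hsum hfixed, hfixed]
    · simp [abs_of_nonneg (sub_nonneg.2 hle)]
  have nonneg : 0 ≤ v - w := abs_eq ▸ abs_nonneg (v - w)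
  have sum_eq_zero : ∑ i, (v - w) i = 0 := by simp [hvw]
  exact sub_eq_zero.1 ((Fintype.sum_eq_zero_iff_of_nonneg nonneg).1 sum_eq_zero)

end PositiveOperator

theorem not_bddAbove_of_forall_exists_mul_le {V : Set ℝ} (hne : V.Nonempty)
    (hpos : ∀ x ∈ V, 0 < x) {c : ℝ} (hc : 1 < c) (h : ∀ x ∈ V, ∃ y ∈ V, c * x ≤ y) :
    ¬BddAbove V := by
  intro hbdd
  obtain ⟨x₀, hx₀⟩ := hne
  have sSup_pos : 0 < sSup V := (hpos x₀ hx₀).trans_le (le_csSup hbdd hx₀)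
  have sSup_le : sSup V ≤ c⁻¹ * sSup V := csSup_le ⟨x₀, hx₀⟩ fun x hx => by
    obtain ⟨y, hy, hxy⟩ := h x hx
    rw [le_inv_mul_iff₀ (by positivity)]
    exact hxy.trans (le_csSup hbdd hy)
  exact sSup_le.not_gt (mul_lt_of_lt_one_left sSup_pos (inv_lt_one_of_one_lt₀ hc))

theorem setIntegral_le_setIntegral_of_le_of_ge {α : Type*} [MeasurableSpace α] {μ : Measure α}
    {E₀ E₁ : Set α} {g : α → ℝ} {c : ℝ} (hg : Integrable g μ) (h₀ : NullMeasurableSet E₀ μ)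
    (h₁ : NullMeasurableSet E₁ μ) (fin₀ : μ E₀ ≠ ⊤) (fin₁ : μ E₁ ≠ ⊤) (hc : 0 ≤ c)
    (hμ : μ.real E₁ ≤ μ.real E₀) (le₁ : ∀ x ∈ E₁, g x ≤ c) (ge₀ : ∀ x ∈ E₀, c ≤ g x) :
    ∫ x in E₁, g x ∂μ ≤ ∫ x in E₀, g x ∂μ :=
  calc ∫ x in E₁, g x ∂μ
      ≤ ∫ _ in E₁, c ∂μ :=
        setIntegral_mono_on₀ hg.integrableOn (integrableOn_const fin₁) h₁ le₁
    _ = μ.real E₁ * c := by rw [setIntegral_const, smul_eq_mul]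
    _ ≤ μ.real E₀ * c := by gcongr
    _ = ∫ _ in E₀, c ∂μ := by rw [setIntegral_const, smul_eq_mul]
    _ ≤ ∫ x in E₀, g x ∂μ :=
        setIntegral_mono_on₀ (integrableOn_const fin₀) hg.integrableOn h₀ ge₀

section UnitInterval

instance : IsProbabilityMeasure lam := ⟨by simp [lam]⟩

theorem lam_eq_restrict_Ico : lam = volume.restrict (Ico 0 1) :=
  restrict_Ico_eq_restrict_Icc.symm

theorem ae_mem_Ico_lam : ∀ᵐ x ∂lam, x ∈ Ico (0 : ℝ) 1 := by
  rw [lam_eq_restrict_Ico]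
  exact ae_restrict_mem measurableSet_Ico

theorem lam_real_Ico {a b : ℝ} (ha : 0 ≤ a) (hab : a ≤ b) (hb : b ≤ 1) :
    lam.real (Ico a b) = b - a := by
  rw [measureReal_def, lam, Measure.restrict_eq_self _ (Ico_subset_Icc_self.trans
    (Icc_subset_Icc ha hb)), Real.volume_Ico, ENNReal.toReal_ofReal (sub_nonneg.2 hab)]

variable {k : ℕ}

theorem measurableSet_Jint (i : ℕ) : MeasurableSet (Jint k i) := measurableSet_Ico

theorem Jint_subset_Ici (i : ℕ) : Jint k i ⊆ Ici 0 := fun _ hx =>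
  (div_nonneg (Nat.cast_nonneg i) (Nat.cast_nonneg k)).trans hx.1

theorem Jint_eq_Ico_add (i : ℕ) : Jint k i = Ico ((i : ℝ) / k) (i / k + 1 / k) := by
  rw [Jint, add_div]

variable [NeZero k]

theorem mem_Jint_iff {x : ℝ} (hx : 0 ≤ x) {i : ℕ} : x ∈ Jint k i ↔ ⌊k * x⌋₊ = i := by
  have hk : (0 : ℝ) < k := Nat.cast_pos.2 (NeZero.pos k)
  rw [Nat.floor_eq_iff (by positivity), Jint, mem_Ico, div_le_iff₀' hk, lt_div_iff₀' hk]

theorem Jint_subset_Ico (i : Fin k) : Jint k i ⊆ Ico 0 1 := fun x hx => by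
  refine ⟨Jint_subset_Ici i hx, hx.2.trans_le ?_⟩
  rw [div_le_one (Nat.cast_pos.2 (NeZero.pos k))]
  exact_mod_cast i.is_lt

theorem exists_mem_Jint {x : ℝ} (hx : x ∈ Ico (0 : ℝ) 1) : ∃ i : Fin k, x ∈ Jint k i := by
  have hk : (0 : ℝ) < k := Nat.cast_pos.2 (NeZero.pos k)
  refine ⟨⟨⌊k * x⌋₊, ?_⟩, (mem_Jint_iff hx.1).2 rfl⟩
  rw [Nat.floor_lt (mul_nonneg hk.le hx.1)]
  exact mul_lt_of_lt_one_right hk hx.2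

theorem pairwise_disjoint_Jint : Pairwise (Function.onFun Disjoint fun i : ℕ => Jint k i) :=
  fun i _ hij => disjoint_left.2 fun _ hi hj => hij <|
    ((mem_Jint_iff (Jint_subset_Ici i hi)).1 hi).symm.trans
      ((mem_Jint_iff (Jint_subset_Ici i hi)).1 hj)

theorem iUnion_Jint : ⋃ i : Fin k, Jint k i = Ico 0 1 :=
  (iUnion_subset Jint_subset_Ico).antisymm fun _ hx => mem_iUnion.2 (exists_mem_Jint hx)

theorem lam_real_Jint (i : Fin k) : lam.real (Jint k i) = 1 / k := by
  have hk : (0 : ℝ) < k := Nat.cast_pos.2 (NeZero.pos k)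
  rw [Jint, lam_real_Ico (by positivity) (by gcongr; linarith), ← sub_div, add_sub_cancel_left]
  rw [div_le_one hk]
  exact_mod_cast i.is_lt

end UnitInterval

section StepFunction

variable {k : ℕ}

/-- The step function with value `v i` on `Jint k i`: elements of the range of `Qk k` are
represented by their vectors of values. -/
noncomputable def stepFun (v : Fin k → ℝ) (x : ℝ) : ℝ :=
  ∑ i : Fin k, (Jint k i).indicator (fun _ => v i) x

theorem Qk_eq_stepFun (f : ℝ → ℝ) :
    Qk k f = stepFun fun i : Fin k => (k : ℝ) * ∫ y in Jint k i, f y ∂lam :=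
  funext fun _ => Finset.sum_range _

theorem stepFun_nonneg {v : Fin k → ℝ} (hv : 0 ≤ v) (x : ℝ) : 0 ≤ stepFun v x :=
  Finset.sum_nonneg fun i _ => indicator_nonneg (fun _ _ => hv i) x

theorem integrable_stepFun (v : Fin k → ℝ) : Integrable (stepFun v) lam :=
  integrable_finsetSum _ fun i _ => (integrable_const (v i)).indicator (measurableSet_Jint i)

theorem setIntegral_stepFun (v : Fin k → ℝ) (S : Set ℝ) :
    ∫ x in S, stepFun v x ∂lam = ∑ i, v i * lam.real (Jint k i ∩ S) := by
  simp only [stepFun]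
  rw [integral_finsetSum _ fun i _ =>
    (integrable_const (v i)).indicator (measurableSet_Jint i)]
  refine Finset.sum_congr rfl fun i _ => ?_
  rw [integral_indicator_const _ (measurableSet_Jint i),
    measureReal_restrict_apply (measurableSet_Jint i), smul_eq_mul, mul_comm]

variable [NeZero k]

theorem stepFun_apply_of_mem {v : Fin k → ℝ} {i : Fin k} {x : ℝ} (hx : x ∈ Jint k i) :
    stepFun v x = v i := by
  rw [stepFun, Finset.sum_eq_single i, indicator_of_mem hx]
  · intro j _ hji
    have hdisj := pairwise_disjoint_Jint (k := k) (Fin.val_ne_of_ne hji)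
    exact indicator_of_notMem (disjoint_right.1 hdisj hx) _
  · simp

theorem antitoneOn_stepFun {v : Fin k → ℝ} (hv : Antitone v) :
    AntitoneOn (stepFun v) (Ico 0 1) := by
  intro x hx y hy hxy
  obtain ⟨i, hi⟩ := exists_mem_Jint (k := k) hx
  obtain ⟨j, hj⟩ := exists_mem_Jint (k := k) hy
  rw [stepFun_apply_of_mem hi, stepFun_apply_of_mem hj]
  refine hv (Fin.val_fin_le.1 ?_)
  rw [← (mem_Jint_iff hx.1).1 hi, ← (mem_Jint_iff hy.1).1 hj]
  gcongr

theorem integral_stepFun (v : Fin k → ℝ) : ∫ x, stepFun v x ∂lam = (∑ i, v i) / k := by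
  rw [← setIntegral_univ, setIntegral_stepFun, Finset.sum_div]
  simp only [inter_univ, lam_real_Jint, mul_one_div]

theorem setIntegral_Jint_stepFun (v : Fin k → ℝ) (i : Fin k) :
    ∫ x in Jint k i, stepFun v x ∂lam = v i / k := by
  rw [setIntegral_congr_fun (measurableSet_Jint i) fun _ hx => stepFun_apply_of_mem hx,
    setIntegral_const, lam_real_Jint, smul_eq_mul, one_div_mul_eq_div]

end StepFunction

section UlamOperator

variable {T : ℝ → ℝ} {k : ℕ}

/-- The Ulam operator `Q^{(k)} ∘ P_T` acting on the values of step functions: the value of the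
image on `Jint k l` is `k` times the mass which `stepFun v` gives to `T ⁻¹' Jint k l`. -/
noncomputable def ulamOp (T : ℝ → ℝ) (k : ℕ) : (Fin k → ℝ) →ₗ[ℝ] (Fin k → ℝ) where
  toFun v l := k * ∫ x in T ⁻¹' Jint k l, stepFun v x ∂lam
  map_add' v w := funext fun l => by
    simp only [setIntegral_stepFun, Pi.add_apply, add_mul, Finset.sum_add_distrib, mul_add]
  map_smul' c v := funext fun l => by
    simp only [setIntegral_stepFun, Pi.smul_apply, smul_eq_mul, mul_assoc, Finset.mul_sum,
      RingHom.id_apply, mul_left_comm c]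

theorem ulamOp_apply (v : Fin k → ℝ) (l : Fin k) :
    ulamOp T k v l = k * ∫ x in T ⁻¹' Jint k l, stepFun v x ∂lam := rfl

theorem ulamOp_nonneg {v : Fin k → ℝ} (hv : 0 ≤ v) : 0 ≤ ulamOp T k v := fun _ =>
  mul_nonneg (Nat.cast_nonneg k) (integral_nonneg (stepFun_nonneg hv))

theorem sum_ulamOp [NeZero k] (hT : AEMeasurable T lam) (hT_mem : ∀ᵐ x ∂lam, T x ∈ Ico (0 : ℝ) 1)
    (v : Fin k → ℝ) : ∑ l, ulamOp T k v l = ∑ l, v l := by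
  have hk : (k : ℝ) ≠ 0 := Nat.cast_ne_zero.2 (NeZero.ne k)
  have mass : ∑ l : Fin k, ∫ x in T ⁻¹' Jint k l, stepFun v x ∂lam = ∫ x, stepFun v x ∂lam := by
    have preimage_eq : ⋃ l : Fin k, T ⁻¹' Jint k l =ᵐ[lam] univ := by
      rw [← preimage_iUnion, iUnion_Jint]
      exact eventuallyEq_univ.2 hT_mem
    have disjoint : Pairwise (Function.onFun (AEDisjoint lam) fun l : Fin k => T ⁻¹' Jint k l) :=
      fun i j hij => Disjoint.aedisjoint <| Disjoint.preimage T <|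
        pairwise_disjoint_Jint (k := k) (Fin.val_ne_of_ne hij)
    have sum_eq := integral_iUnion_ae (f := stepFun v)
      (fun l : Fin k => hT.nullMeasurableSet_preimage (measurableSet_Jint l)) disjoint
      (integrable_stepFun v).integrableOn
    rw [tsum_fintype] at sum_eq
    rw [← sum_eq, setIntegral_congr_set preimage_eq, setIntegral_univ]
  simp only [ulamOp_apply, ← Finset.mul_sum, mass, integral_stepFun]
  exact mul_div_cancel₀ _ hk

theorem IsUlamFixed.exists_ulamOp_eq_self [NeZero k] {f : ℝ → ℝ} (hf : IsUlamFixed T k f) :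
    ∃ w : Fin k → ℝ, ulamOp T k w = w ∧ 0 ≤ w ∧ ∑ i, w i = k ∧ f =ᵐ[lam] stepFun w := by
  have hk : (k : ℝ) ≠ 0 := Nat.cast_ne_zero.2 (NeZero.ne k)
  obtain ⟨-, -, nonneg, integral_eq_one, g, -, hg, hQ⟩ := hf
  let w (i : Fin k) : ℝ := k * ∫ y in Jint k i, g y ∂lam
  have f_ae_eq : f =ᵐ[lam] stepFun w := by
    rw [← Qk_eq_stepFun]
    exact hQ.symm
  have w_eq (i : Fin k) : w i = k * ∫ x in T ⁻¹' Jint k i, f x ∂lam :=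
    congrArg _ (hg _ (measurableSet_Jint i) ((Jint_subset_Ico i).trans Ico_subset_Icc_self))
  have f_nonneg : 0 ≤ᵐ[lam] f := (ae_restrict_mem measurableSet_Icc).mono nonneg
  refine ⟨w, funext fun l => ?_, fun i => ?_, ?_, f_ae_eq⟩
  · rw [ulamOp_apply, w_eq, integral_congr_ae (ae_restrict_of_ae f_ae_eq)]
  · rw [w_eq]
    exact mul_nonneg (Nat.cast_nonneg k)
      (integral_nonneg_of_ae (ae_restrict_of_ae f_nonneg))
  · rw [integral_congr_ae f_ae_eq, integral_stepFun] at integral_eq_one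
    exact (div_eq_one_iff_eq hk).1 integral_eq_one

end UlamOperator

section ConvexBranch

/-- A branch of a piecewise convex map: `T` is continuous and convex on `[p, q)`, vanishes at `p`
and has right derivative `e > 0` there. -/
structure IsConvexBranch (T : ℝ → ℝ) (p q e : ℝ) : Prop where
  lt : p < q
  continuousOn : ContinuousOn T (Ico p q)
  convexOn : ConvexOn ℝ (Ico p q) T
  map_left : T p = 0
  hasDerivWithinAt : HasDerivWithinAt T e (Ici p) p
  deriv_pos : 0 < e

namespace IsConvexBranch

variable {T : ℝ → ℝ} {p q e : ℝ} (hT : IsConvexBranch T p q e)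
include hT

theorem mul_sub_le {x : ℝ} (hx : x ∈ Ico p q) : e * (x - p) ≤ T x := by
  obtain rfl | hpx := hx.1.eq_or_lt
  · simp [hT.map_left]
  have h := hT.convexOn.le_slope_of_hasDerivWithinAt_Ioi (left_mem_Ico.2 hT.lt) hx hpx
    (hT.hasDerivWithinAt.mono Ioi_subset_Ici_self)
  rwa [slope_def_field, hT.map_left, sub_zero, le_div_iff₀ (sub_pos.2 hpx)] at h

theorem nonneg {x : ℝ} (hx : x ∈ Ico p q) : 0 ≤ T x :=
  (mul_nonneg hT.deriv_pos.le (sub_nonneg.2 hx.1)).trans (hT.mul_sub_le hx)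

theorem pos {x : ℝ} (hx : x ∈ Ioo p q) : 0 < T x :=
  (mul_pos hT.deriv_pos (sub_pos.2 hx.1)).trans_le (hT.mul_sub_le (Ioo_subset_Ico_self hx))

theorem div_le_sub_div {s t : ℝ} (hs : s ∈ Ioo p q) (ht : t ∈ Ico p q) (hst : s < t) :
    (t - s) / (s - p) ≤ (T t - T s) / T s := by
  have h := hT.convexOn.slope_mono_adjacent (left_mem_Ico.2 hT.lt) ht hs.1 hst
  rw [hT.map_left, sub_zero, div_le_div_iff₀ (sub_pos.2 hs.1) (sub_pos.2 hst)] at h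
  rwa [div_le_div_iff₀ (sub_pos.2 hs.1) (hT.pos hs), mul_comm]

theorem strictMonoOn : StrictMonoOn T (Ico p q) := by
  intro s hs t ht hst
  obtain rfl | hps := hs.1.eq_or_lt
  · rw [hT.map_left]
    exact hT.pos ⟨hst, ht.2⟩
  · have hs' : s ∈ Ioo p q := ⟨hps, hs.2⟩
    have slope_pos := (div_pos (sub_pos.2 hst) (sub_pos.2 hps)).trans_le
      (hT.div_le_sub_div hs' ht hst)
    exact sub_pos.1 ((div_pos_iff_of_pos_right (hT.pos hs')).1 slope_pos)

theorem tendsto_nhdsGE {x : ℝ} (hx : x ∈ Ico p q) : Tendsto T (𝓝[≥] x) (𝓝[≥] (T x)) := by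
  have Ico_mem : Ico p q ∈ 𝓝[≥] x := Ico_mem_nhdsGE_of_mem hx
  refine tendsto_nhdsWithin_iff.2 ⟨(hT.continuousOn x hx).mono_left ?_, ?_⟩
  · exact nhdsWithin_le_iff.2 Ico_mem
  · filter_upwards [Ico_mem, self_mem_nhdsWithin] with y hy hxy
    exact hT.strictMonoOn.monotoneOn hx hy hxy

theorem Icc_subset_image {s t : ℝ} (hs : s ∈ Ico p q) (ht : t ∈ Ico p q) (hst : s ≤ t) :
    Icc (T s) (T t) ⊆ T '' Icc s t :=
  intermediate_value_Icc hst
    (hT.continuousOn.mono fun _ hx => ⟨hs.1.trans hx.1, hx.2.trans_lt ht.2⟩)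

theorem mem_Icc_of_lt {x h : ℝ} (hx : x ∈ Ico p q) (hxh : T x < h) : x ∈ Icc p (p + h / e) := by
  refine ⟨hx.1, sub_le_iff_le_add'.1 ?_⟩
  rw [le_div_iff₀ hT.deriv_pos, mul_comm]
  exact (hT.mul_sub_le hx).trans hxh.le

theorem measurableSet_levelSet (α β : ℝ) : MeasurableSet (Ico p q ∩ T ⁻¹' Ico α β) := by
  refine OrdConnected.measurableSet ⟨fun x hx y hy z hz => ?_⟩
  have hz' : z ∈ Ico p q := ⟨hx.1.1.trans hz.1, hz.2.trans_lt hy.1.2⟩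
  exact ⟨hz', hx.2.1.trans (hT.strictMonoOn.monotoneOn hx.1 hz' hz.1),
    (hT.strictMonoOn.monotoneOn hz' hy.1 hz.2).trans_lt hy.2.2⟩

theorem sub_le_sub_of_sub_le_sub {y z x : ℝ} (hy : y ∈ Ico p q) (hx : x ∈ Ico p q) (hyz : y ≤ z)
    (hzx : z ≤ x) (h : T x - T z ≤ T z - T y) : x - z ≤ z - y := by
  obtain rfl | hzx := hzx.eq_or_lt
  · linarith
  have hz : z ∈ Ico p q := ⟨hy.1.trans hyz, hzx.trans hx.2⟩
  have hTzx := hT.strictMonoOn hz hx hzx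
  obtain rfl | hyz := hyz.eq_or_lt
  · linarith
  have slope_le := hT.convexOn.slope_mono_adjacent hy hx hyz hzx
  rw [div_le_div_iff₀ (sub_pos.2 hyz) (sub_pos.2 hzx)] at slope_le
  have : (T x - T z) * (x - z) ≤ (T x - T z) * (z - y) :=
    (mul_le_mul_of_nonneg_right h (sub_pos.2 hzx).le).trans slope_le
  exact le_of_mul_le_mul_left this (sub_pos.2 hTzx)

-- Convexity makes the branch climb from `α + h` to `α + 2h` over a shorter interval than
-- from `α` to `α + h`.
theorem exists_separating_levelSets {α h : ℝ} (hα : 0 ≤ α) (hh : 0 ≤ h)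
    (hne : (Ico p q ∩ T ⁻¹' Ico (α + h) (α + h + h)).Nonempty) :
    ∃ z ∈ Ico p q, Ico p q ∩ T ⁻¹' Ico α (α + h) ⊆ Iic z ∧
      Ico p q ∩ T ⁻¹' Ico (α + h) (α + h + h) ⊆ Ici z ∧
      volume (Ico p q ∩ T ⁻¹' Ico (α + h) (α + h + h)) ≤
        volume (Ico p q ∩ T ⁻¹' Ico α (α + h)) := by
  obtain ⟨r, hr, hαr, -⟩ := hne
  have hp : p ∈ Ico p q := left_mem_Ico.2 hT.lt
  obtain ⟨z, hz, hTz⟩ := hT.Icc_subset_image hp hr hr.1 ⟨by rw [hT.map_left]; positivity, hαr⟩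
  replace hz : z ∈ Ico p q := ⟨hz.1, hz.2.trans_lt hr.2⟩
  have hαz : α ∈ Icc (T p) (T z) := by
    rw [hT.map_left, hTz]
    exact ⟨hα, le_add_of_nonneg_right hh⟩
  obtain ⟨y, ⟨hpy, hyz⟩, hTy⟩ := hT.Icc_subset_image hp hz hz.1 hαz
  have hy : y ∈ Ico p q := ⟨hpy, hyz.trans_lt hz.2⟩
  have upper_subset : Ico p q ∩ T ⁻¹' Ico (α + h) (α + h + h) ⊆ Ici z := fun x hx =>
    (hT.strictMonoOn.le_iff_le hz hx.1).1 (hTz.trans_le hx.2.1)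
  refine ⟨z, hz, fun x hx => ?_, upper_subset, ?_⟩
  · exact (hT.strictMonoOn.le_iff_le hx.1 hz).1 (hx.2.2.le.trans hTz.ge)
  calc volume (Ico p q ∩ T ⁻¹' Ico (α + h) (α + h + h))
      ≤ volume (Icc z (z + (z - y))) := measure_mono fun x hx => ⟨upper_subset hx, by
        have := hT.sub_le_sub_of_sub_le_sub hy hx.1 hyz (upper_subset hx)
          (by have := hx.2.2; linarith)
        linarith⟩
    _ = volume (Ico y z) := by rw [Real.volume_Icc, Real.volume_Ico, add_sub_cancel_left]
    _ ≤ volume (Ico p q ∩ T ⁻¹' Ico α (α + h)) := measure_mono fun x hx => by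
        have hx' : x ∈ Ico p q := ⟨hpy.trans hx.1, hx.2.trans hz.2⟩
        exact ⟨hx', hTy.symm.trans_le (hT.strictMonoOn.monotoneOn hy hx' hx.1),
          (hT.strictMonoOn hx' hz hx.2).trans_eq hTz⟩

theorem setIntegral_levelSet_le (hp : 0 ≤ p) (hq : q ≤ 1) {g : ℝ → ℝ} (hg : Integrable g lam)
    (hg_anti : AntitoneOn g (Ico p q)) (hg_nonneg : ∀ x ∈ Ico p q, 0 ≤ g x) {α h : ℝ}
    (hα : 0 ≤ α) (hh : 0 ≤ h) :
    ∫ x in Ico p q ∩ T ⁻¹' Ico (α + h) (α + h + h), g x ∂lam ≤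
      ∫ x in Ico p q ∩ T ⁻¹' Ico α (α + h), g x ∂lam := by
  obtain hempty | hne :=
    (Ico p q ∩ T ⁻¹' Ico (α + h) (α + h + h)).eq_empty_or_nonempty
  · rw [hempty, setIntegral_empty]
    exact setIntegral_nonneg (hT.measurableSet_levelSet _ _) fun x hx => hg_nonneg x hx.1
  obtain ⟨z, hz, hlower, hupper, hvol⟩ := hT.exists_separating_levelSets hα hh hne
  have lam_eq (α β : ℝ) : lam (Ico p q ∩ T ⁻¹' Ico α β) = volume (Ico p q ∩ T ⁻¹' Ico α β) :=
    Measure.restrict_eq_self _ fun x hx => ⟨hp.trans hx.1.1, hx.1.2.le.trans hq⟩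
  refine setIntegral_le_setIntegral_of_le_of_ge (c := g z) hg
    (hT.measurableSet_levelSet _ _).nullMeasurableSet
    (hT.measurableSet_levelSet _ _).nullMeasurableSet (measure_ne_top _ _) (measure_ne_top _ _)
    (hg_nonneg z hz) ?_ (fun x hx => hg_anti hz hx.1 (hupper hx))
    fun x hx => hg_anti hx.1 hz (hlower hx)
  exact ENNReal.toReal_mono (measure_ne_top _ _) (by rw [lam_eq, lam_eq]; exact hvol)

theorem setIntegral_levelSet_zero_le {g : ℝ → ℝ} (hg : Integrable g lam)
    (hg_anti : AntitoneOn g (Ico p q)) (hgp : 0 ≤ g p) {h : ℝ} (hh : 0 ≤ h) :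
    ∫ x in Ico p q ∩ T ⁻¹' Ico 0 h, g x ∂lam ≤ h / e * g p := by
  have hp_mem : p ∈ Ico p q := left_mem_Ico.2 hT.lt
  have length_le : lam.real (Ico p q ∩ T ⁻¹' Ico 0 h) ≤ h / e :=
    calc lam.real (Ico p q ∩ T ⁻¹' Ico 0 h)
        ≤ volume.real (Ico p q ∩ T ⁻¹' Ico 0 h) :=
          ENNReal.toReal_mono ((measure_mono inter_subset_left).trans_lt measure_Ico_lt_top).ne
            (Measure.restrict_apply_le _ _)
      _ ≤ volume.real (Icc p (p + h / e)) :=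
          measureReal_mono (fun x hx => hT.mem_Icc_of_lt hx.1 hx.2.2) measure_Icc_lt_top.ne
      _ = h / e := by
          have : 0 ≤ h / e := div_nonneg hh hT.deriv_pos.le
          rw [Real.volume_real_Icc_of_le (le_add_of_nonneg_right this), add_sub_cancel_left]
  calc ∫ x in Ico p q ∩ T ⁻¹' Ico 0 h, g x ∂lam
      ≤ ∫ _ in Ico p q ∩ T ⁻¹' Ico 0 h, g p ∂lam :=
        setIntegral_mono_on hg.integrableOn (integrable_const _) (hT.measurableSet_levelSet _ _)
          fun x hx => hg_anti hp_mem hx.1 hx.1.1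
    _ = lam.real (Ico p q ∩ T ⁻¹' Ico 0 h) * g p := by rw [setIntegral_const, smul_eq_mul]
    _ ≤ h / e * g p := by gcongr

end IsConvexBranch

end ConvexBranch

/-- A piecewise convex map of `[0, 1)`: the intervals `[p i, q i)` partition `[0, 1)`, and `T` has
a convex branch with derivative `e i` at its left endpoint on each of them. -/
structure PiecewiseConvex {ι : Type*} (T : ℝ → ℝ) (p q e : ι → ℝ) : Prop where
  branch (i : ι) : IsConvexBranch T (p i) (q i) (e i)
  iUnion_Ico : ⋃ i, Ico (p i) (q i) = Ico 0 1
  disjoint : Pairwise (Function.onFun Disjoint fun i => Ico (p i) (q i))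
  le_one : ∀ x ∈ Ico (0 : ℝ) 1, T x ≤ 1

namespace PiecewiseConvex

variable {ι : Type*} {T : ℝ → ℝ} {p q e : ι → ℝ} (hT : PiecewiseConvex T p q e)
include hT

theorem Ico_subset (i : ι) : Ico (p i) (q i) ⊆ Ico 0 1 :=
  hT.iUnion_Ico ▸ subset_iUnion (fun i => Ico (p i) (q i)) i

theorem exists_mem_Ico {x : ℝ} (hx : x ∈ Ico (0 : ℝ) 1) : ∃ i, x ∈ Ico (p i) (q i) := by
  rwa [← hT.iUnion_Ico, mem_iUnion] at hx

theorem left_mem_Ico (i : ι) : p i ∈ Ico (0 : ℝ) 1 :=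
  hT.Ico_subset i (Set.left_mem_Ico.2 (hT.branch i).lt)

theorem right_le_one (i : ι) : q i ≤ 1 := by
  by_contra! h
  exact (hT.Ico_subset i ⟨(hT.left_mem_Ico i).2.le, h⟩).2.false

theorem mapsTo_Ico : MapsTo T (Ico 0 1) (Ico 0 1) := by
  intro x hx
  obtain ⟨i, hi⟩ := hT.exists_mem_Ico hx
  obtain ⟨y, hxy, hyq⟩ := exists_between hi.2
  have hy : y ∈ Ico (p i) (q i) := ⟨hi.1.trans hxy.le, hyq⟩
  exact ⟨(hT.branch i).nonneg hi,
    ((hT.branch i).strictMonoOn hi hy hxy).trans_le (hT.le_one y (hT.Ico_subset i hy))⟩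

theorem ae_map_mem_Ico : ∀ᵐ x ∂lam, T x ∈ Ico (0 : ℝ) 1 :=
  ae_mem_Ico_lam.mono hT.mapsTo_Ico

theorem aemeasurable [Countable ι] : AEMeasurable T lam := by
  rw [lam_eq_restrict_Ico, ← hT.iUnion_Ico, aemeasurable_iUnion_iff]
  exact fun i => (hT.branch i).continuousOn.aemeasurable measurableSet_Ico

theorem setIntegral_preimage_eq_sum [Fintype ι] {B : Set ℝ} (hB : MeasurableSet B) {g : ℝ → ℝ}
    (hg : Integrable g lam) :
    ∫ x in T ⁻¹' B, g x ∂lam = ∑ i, ∫ x in Ico (p i) (q i) ∩ T ⁻¹' B, g x ∂lam := by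
  have preimage_eq : T ⁻¹' B =ᵐ[lam] ⋃ i, Ico (p i) (q i) ∩ T ⁻¹' B := by
    rw [← iUnion_inter, hT.iUnion_Ico]
    exact (inter_ae_eq_right_of_ae_eq_univ (eventuallyEq_univ.2 ae_mem_Ico_lam)).symm
  have measurable (i : ι) : NullMeasurableSet (Ico (p i) (q i) ∩ T ⁻¹' B) lam :=
    measurableSet_Ico.nullMeasurableSet.inter (hT.aemeasurable.nullMeasurableSet_preimage hB)
  have disjoint : Pairwise (Function.onFun (AEDisjoint lam)
      fun i => Ico (p i) (q i) ∩ T ⁻¹' B) :=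
    fun i j hij => ((hT.disjoint hij).mono inter_subset_left inter_subset_left).aedisjoint
  rw [setIntegral_congr_set preimage_eq, integral_iUnion_ae measurable disjoint hg.integrableOn,
    tsum_fintype]

variable {k : ℕ} [NeZero k]

theorem antitone_ulamOp [Finite ι] {v : Fin k → ℝ} (hv : Antitone v) (hv_nonneg : 0 ≤ v) :
    Antitone (ulamOp T k v) := by
  have := Fintype.ofFinite ι
  have cell_mass_antitone : Antitone fun l : ℕ => ∫ x in T ⁻¹' Jint k l, stepFun v x ∂lam := by
    refine antitone_nat_of_succ_le fun l => ?_
    rw [hT.setIntegral_preimage_eq_sum (measurableSet_Jint _) (integrable_stepFun v),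
      hT.setIntegral_preimage_eq_sum (measurableSet_Jint _) (integrable_stepFun v)]
    simp only [Jint_eq_Ico_add, Nat.cast_add_one, add_div]
    exact Finset.sum_le_sum fun i _ => (hT.branch i).setIntegral_levelSet_le (hT.left_mem_Ico i).1
      (hT.right_le_one i) (integrable_stepFun v)
      ((antitoneOn_stepFun hv).mono (hT.Ico_subset i)) (fun x _ => stepFun_nonneg hv_nonneg x)
      (by positivity) (by positivity)
  exact fun l m hlm => mul_le_mul_of_nonneg_left (cell_mass_antitone hlm) (Nat.cast_nonneg k)

theorem ulamOp_zero_le [Fintype ι] {v : Fin k → ℝ} (hv : Antitone v) (hv_nonneg : 0 ≤ v) :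
    ulamOp T k v 0 ≤ ∑ i, stepFun v (p i) / e i := by
  have hk : (0 : ℝ) < k := Nat.cast_pos.2 (NeZero.pos k)
  rw [ulamOp_apply, hT.setIntegral_preimage_eq_sum (measurableSet_Jint _) (integrable_stepFun v),
    Finset.mul_sum]
  refine Finset.sum_le_sum fun i _ => ?_
  have branch_mass_le := (hT.branch i).setIntegral_levelSet_zero_le
    (integrable_stepFun v) ((antitoneOn_stepFun hv).mono (hT.Ico_subset i))
    (stepFun_nonneg hv_nonneg _) (h := 1 / k) (by positivity)
  have hJ : Jint k (0 : Fin k) = Ico 0 (1 / (k : ℝ)) := by simp [Jint]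
  calc k * ∫ x in Ico (p i) (q i) ∩ T ⁻¹' Jint k (0 : Fin k), stepFun v x ∂lam
      ≤ k * (1 / k / e i * stepFun v (p i)) := by rw [hJ]; gcongr
    _ = stepFun v (p i) / e i := by field_simp

end PiecewiseConvex

section Irreducibility

theorem lam_real_pos_of_mem_nhdsGE {x : ℝ} (hx : x ∈ Ico (0 : ℝ) 1) {s : Set ℝ}
    (hs : s ∈ 𝓝[≥] x) : 0 < lam.real s := by
  obtain ⟨u, hu, hus⟩ := (mem_nhdsGE_iff_exists_mem_Ioc_Ico_subset hx.2).1 hs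
  calc 0 < u - x := sub_pos.2 hu.1
    _ = lam.real (Ico x u) := (lam_real_Ico hx.1 hu.1.le hu.2).symm
    _ ≤ lam.real s := measureReal_mono hus

theorem IsConvexBranch.div_mul_le_sub_div {T : ℝ → ℝ} {p q e : ℝ} (hT : IsConvexBranch T p q e)
    (hp : 0 ≤ p) {s t : ℝ} (hs : s ∈ Ioo p q) (hs_le : s ≤ 1) (ht : t ∈ Ico p q)
    (hst : s < t) : 1 / (1 - p) * ((t - s) / s) ≤ (T t - T s) / T s := by
  refine le_trans ?_ (hT.div_le_sub_div hs ht hst)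
  rw [div_mul_div_comm, one_mul]
  exact div_le_div_of_nonneg_left (sub_pos.2 hst).le (sub_pos.2 hs.1) (by nlinarith)

-- The left endpoint `s` of a subinterval may shrink in a branch with `0 < p`, but the relative
-- length `(t - s) / s` then grows by the factor `c`, and `A` is so large that this dominates.
theorem IsConvexBranch.mul_relLength_le {T : ℝ → ℝ} {p q e : ℝ} (hT : IsConvexBranch T p q e)
    (hp : 0 ≤ p) {c δ : ℝ} {A : ℕ} (hc : 1 < c) (hce : p = 0 → c ≤ e)
    (hcp : 0 < p → c ≤ 1 / (1 - p)) (hδ : 0 < δ) (hA : c ≤ c ^ A * δ) {s t : ℝ} (hst : s < t)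
    (hs : s ∈ Ioo p q) (hs_le : s ≤ 1) (ht : t ∈ Ico p q) (hTs : δ ≤ T s) :
    c * (((t - s) / s) ^ A * s) ≤ ((T t - T s) / T s) ^ A * T s := by
  have hs_pos : 0 < s := hp.trans_lt hs.1
  have rel_pos : 0 < (t - s) / s := div_pos (sub_pos.2 hst) hs_pos
  have rel_le := hT.div_mul_le_sub_div hp hs hs_le ht hst
  have rel_map_nonneg : 0 ≤ (T t - T s) / T s :=
    (div_pos (sub_pos.2 (hT.strictMonoOn (Ioo_subset_Ico_self hs) ht hst)) (hT.pos hs)).le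
  generalize (t - s) / s = r at *
  generalize (T t - T s) / T s = r' at *
  obtain rfl | hp := hp.eq_or_lt
  · rw [sub_zero, div_one, one_mul] at rel_le
    have left_le : c * s ≤ T s := by
      have := hT.mul_sub_le (Ioo_subset_Ico_self hs)
      rw [sub_zero] at this
      exact (mul_le_mul_of_nonneg_right (hce rfl) hs_pos.le).trans this
    calc c * (r ^ A * s) = r ^ A * (c * s) := by ring
      _ ≤ r' ^ A * T s := by gcongr
  · have rel_grows : c * r ≤ r' := (mul_le_mul_of_nonneg_right (hcp hp) rel_pos.le).trans rel_le
    calc c * (r ^ A * s) ≤ c ^ A * δ * (r ^ A * 1) := by gcongr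
      _ = (c * r) ^ A * δ := by ring
      _ ≤ r' ^ A * T s := by gcongr

namespace PiecewiseConvex

variable {ι : Type*} {T : ℝ → ℝ} {p q e : ι → ℝ} (hT : PiecewiseConvex T p q e)
include hT

theorem exists_lt_of_Icc_subset {U : Set ℝ} (hU : U ⊆ Ioo 0 1) (hmaps : MapsTo T U U) {s t : ℝ}
    (hst : s ≤ t) (h : Icc s t ⊆ U) : ∃ i, p i < s ∧ t < q i := by
  obtain ⟨i, hi⟩ := hT.exists_mem_Ico (Ioo_subset_Ico_self (hU (h (right_mem_Icc.2 hst))))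
  refine ⟨i, ?_, hi.2⟩
  by_contra! hsp
  have map_left_mem := hmaps (h ⟨hsp, hi.1⟩)
  rw [(hT.branch i).map_left] at map_left_mem
  exact (hU map_left_mem).1.false

theorem exists_expansion_const [Finite ι] (hexp : ∀ i, p i = 0 → 1 < e i) :
    ∃ c > 1, ∀ i, (p i = 0 → c ≤ e i) ∧ (0 < p i → c ≤ 1 / (1 - p i)) := by
  have eventually_le {M : ℝ} (hM : 1 < M) : ∀ᶠ c in 𝓝[>] (1 : ℝ), c ≤ M :=
    (eventually_le_nhds hM).filter_mono nhdsWithin_le_nhds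
  have key : ∀ᶠ c in 𝓝[>] (1 : ℝ), ∀ i, (p i = 0 → c ≤ e i) ∧ (0 < p i → c ≤ 1 / (1 - p i)) := by
    refine eventually_all.2 fun i => ?_
    simp only [eventually_and, eventually_imp_distrib_left]
    refine ⟨fun h => eventually_le (hexp i h), fun h => eventually_le ?_⟩
    rw [one_lt_div (sub_pos.2 (hT.left_mem_Ico i).2)]
    exact sub_lt_self 1 h
  obtain ⟨c, hc, h⟩ := (eventually_mem_nhdsWithin.and key).exists
  exact ⟨c, hc, h⟩

theorem exists_expanded_Icc_subset {c δ : ℝ} {A : ℕ} (hc : 1 < c)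
    (hcT : ∀ i, (p i = 0 → c ≤ e i) ∧ (0 < p i → c ≤ 1 / (1 - p i))) (hδ : 0 < δ)
    (hA : c ≤ c ^ A * δ) {U : Set ℝ} (hU : U ⊆ Ico δ 1) (hmaps : MapsTo T U U) {s t : ℝ}
    (hst : s < t) (h : Icc s t ⊆ U) :
    ∃ s' t', s' < t' ∧ Icc s' t' ⊆ U ∧
      c * (((t - s) / s) ^ A * s) ≤ ((t' - s') / s') ^ A * s' := by
  obtain ⟨i, hs, ht⟩ := hT.exists_lt_of_Icc_subset
    (fun x hx => ⟨hδ.trans_le (hU hx).1, (hU hx).2⟩) hmaps hst.le h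
  have hs_mem : s ∈ U := h (left_mem_Icc.2 hst.le)
  have hs' : s ∈ Ioo (p i) (q i) := ⟨hs, hst.trans ht⟩
  have ht' : t ∈ Ico (p i) (q i) := ⟨hs.le.trans hst.le, ht⟩
  refine ⟨T s, T t, (hT.branch i).strictMonoOn (Ioo_subset_Ico_self hs') ht' hst, ?_, ?_⟩
  · exact ((hT.branch i).Icc_subset_image (Ioo_subset_Ico_self hs') ht' hst.le).trans
      ((image_mono h).trans hmaps.image_subset)
  · exact (hT.branch i).mul_relLength_le (hT.left_mem_Ico i).1 hc (hcT i).1 (hcT i).2 hδ hA hst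
      hs' (hU hs_mem).2.le ht' (hU (hmaps hs_mem)).1

theorem not_Icc_subset_of_mapsTo [Finite ι] (hexp : ∀ i, p i = 0 → 1 < e i) {U : Set ℝ} {δ : ℝ}
    (hδ : 0 < δ) (hU : U ⊆ Ico δ 1) (hmaps : MapsTo T U U) {s t : ℝ} (hst : s < t) :
    ¬Icc s t ⊆ U := by
  obtain ⟨c, hc, hcT⟩ := hT.exists_expansion_const hexp
  obtain ⟨A, hA⟩ := pow_unbounded_of_one_lt (c / δ) hc
  rw [div_lt_iff₀ hδ] at hA
  intro hU_Icc
  let V : Set ℝ := {x | ∃ s t, s < t ∧ Icc s t ⊆ U ∧ x = ((t - s) / s) ^ A * s}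
  refine not_bddAbove_of_forall_exists_mul_le (V := V) ⟨_, s, t, hst, hU_Icc, rfl⟩ ?_ hc ?_ ?_
  · rintro _ ⟨s, t, hst, h, rfl⟩
    have hs : 0 < s := hδ.trans_le (hU (h (left_mem_Icc.2 hst.le))).1
    have : 0 < t - s := sub_pos.2 hst
    positivity
  · rintro _ ⟨s, t, hst, h, rfl⟩
    obtain ⟨s', t', hst', h', hgrow⟩ :=
      hT.exists_expanded_Icc_subset hc hcT hδ hA.le hU hmaps hst h
    exact ⟨_, ⟨s', t', hst', h', rfl⟩, hgrow⟩
  · refine ⟨(1 / δ) ^ A, ?_⟩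
    rintro _ ⟨s, t, hst, h, rfl⟩
    have hs := hU (h (left_mem_Icc.2 hst.le))
    have ht := hU (h (right_mem_Icc.2 hst.le))
    have : 0 < t - s := sub_pos.2 hst
    have hs_pos : 0 < s := hδ.trans_le hs.1
    calc ((t - s) / s) ^ A * s ≤ (1 / δ) ^ A * 1 := by gcongr <;> linarith [hs.1, hs.2, ht.2]
      _ = (1 / δ) ^ A := mul_one _

theorem mapsTo_support_stepFun {k : ℕ} [NeZero k] {w : Fin k → ℝ} (hw : ulamOp T k w = w)
    (hw_nonneg : 0 ≤ w) :
    MapsTo T {x ∈ Ico (0 : ℝ) 1 | 0 < stepFun w x} {x ∈ Ico (0 : ℝ) 1 | 0 < stepFun w x} := by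
  rintro x ⟨hx, hwx⟩
  have hTx := hT.mapsTo_Ico hx
  obtain ⟨i, hi⟩ := exists_mem_Jint (k := k) hx
  obtain ⟨l, hl⟩ := exists_mem_Jint (k := k) hTx
  obtain ⟨b, hb⟩ := hT.exists_mem_Ico hx
  refine ⟨hTx, ?_⟩
  rw [stepFun_apply_of_mem hi] at hwx
  have overlap_pos : 0 < lam.real (Jint k i ∩ T ⁻¹' Jint k l) :=
    lam_real_pos_of_mem_nhdsGE hx <| inter_mem (Ico_mem_nhdsGE_of_mem hi)
      ((hT.branch b).tendsto_nhdsGE hb (Ico_mem_nhdsGE_of_mem hl))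
  rw [stepFun_apply_of_mem hl, ← hw, ulamOp_apply, setIntegral_stepFun]
  refine mul_pos (Nat.cast_pos.2 (NeZero.pos k)) <| (mul_pos hwx overlap_pos).trans_le ?_
  exact Finset.single_le_sum (f := fun i : Fin k => w i * lam.real (Jint k i ∩ T ⁻¹' Jint k l))
    (fun j _ => mul_nonneg (hw_nonneg j) measureReal_nonneg) (Finset.mem_univ i)

theorem eq_zero_of_ulamOp_eq_self [Finite ι] (hexp : ∀ i, p i = 0 → 1 < e i) {k : ℕ} [NeZero k]
    {w : Fin k → ℝ} (hw_nonneg : 0 ≤ w) (hw : ulamOp T k w = w) (hw_zero : w 0 = 0) : w = 0 := by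
  have hk : (0 : ℝ) < k := Nat.cast_pos.2 (NeZero.pos k)
  by_contra hne
  obtain ⟨i, hi⟩ := Function.ne_iff.1 hne
  have support_subset : {x ∈ Ico (0 : ℝ) 1 | 0 < stepFun w x} ⊆ Ico (1 / (k : ℝ)) 1 := by
    rintro x ⟨hx, hwx⟩
    refine ⟨?_, hx.2⟩
    by_contra! hxk
    have hx0 : x ∈ Jint k (0 : Fin k) := by simpa [Jint] using ⟨hx.1, by rwa [one_div] at hxk⟩
    rw [stepFun_apply_of_mem hx0, hw_zero] at hwx
    exact hwx.false
  obtain ⟨t, hst, ht⟩ := exists_between (show (i : ℝ) / k < (i + 1) / k by gcongr; linarith)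
  refine hT.not_Icc_subset_of_mapsTo hexp (by positivity) support_subset
    (hT.mapsTo_support_stepFun hw hw_nonneg) hst fun x hx => ?_
  have hx_mem : x ∈ Jint k i := ⟨hx.1, hx.2.trans_lt ht⟩
  refine ⟨Jint_subset_Ico i hx_mem, ?_⟩
  rw [stepFun_apply_of_mem hx_mem]
  exact (hw_nonneg i).lt_of_ne' hi

end PiecewiseConvex

end Irreducibility

section SupBound

theorem mul_le_integral_of_antitoneOn {g : ℝ → ℝ} (hg : Integrable g lam)
    (hg_anti : AntitoneOn g (Ico 0 1)) (hg_nonneg : ∀ x ∈ Ico (0 : ℝ) 1, 0 ≤ g x) {x : ℝ}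
    (hx : x ∈ Ico (0 : ℝ) 1) : x * g x ≤ ∫ y, g y ∂lam :=
  calc x * g x
      = ∫ _ in Ico 0 x, g x ∂lam := by
        rw [setIntegral_const, lam_real_Ico le_rfl hx.1 hx.2.le, sub_zero, smul_eq_mul]
    _ ≤ ∫ y in Ico 0 x, g y ∂lam :=
        setIntegral_mono_on (integrable_const _) hg.integrableOn measurableSet_Ico
          fun y hy => hg_anti ⟨hy.1, hy.2.trans hx.2⟩ hx hy.2.le
    _ ≤ ∫ y, g y ∂lam := setIntegral_le_integral hg (ae_mem_Ico_lam.mono hg_nonneg)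

namespace PiecewiseConvex

variable {ι : Type*} {T : ℝ → ℝ} {p q e : ι → ℝ} (hT : PiecewiseConvex T p q e)
  {k : ℕ} [NeZero k] {w : Fin k → ℝ}
include hT

theorem exists_antitone_ulamOp_eq_self [Finite ι] :
    ∃ v : Fin k → ℝ, ulamOp T k v = v ∧ 0 ≤ v ∧ ∑ i, v i = k ∧ Antitone v := by
  let K : Set (Fin k → ℝ) := {v | 0 ≤ v ∧ ∑ i, v i = k ∧ Antitone v}
  have K_closed : IsClosed K := by
    refine (isClosed_Ici (a := (0 : Fin k → ℝ))).inter (IsClosed.inter ?_ isClosed_antitone)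
    exact isClosed_eq (by fun_prop) continuous_const
  have K_compact : IsCompact K := by
    refine isCompact_Icc.of_isClosed_subset K_closed (s := Icc 0 fun _ => (k : ℝ)) ?_
    exact fun v ⟨hv, hsum, _⟩ => ⟨hv, fun i =>
      hsum ▸ Finset.single_le_sum (fun j _ => hv j) (Finset.mem_univ i)⟩
  have K_convex : Convex ℝ K := by
    rintro v ⟨hv, hv_sum, hv_anti⟩ w ⟨hw, hw_sum, hw_anti⟩ a b ha hb hab
    refine ⟨by positivity, ?_, (hv_anti.const_smul ha).add (hw_anti.const_smul hb)⟩
    simp only [Pi.add_apply, Pi.smul_apply, smul_eq_mul, Finset.sum_add_distrib,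
      ← Finset.mul_sum, hv_sum, hw_sum, ← add_mul, hab, one_mul]
  have K_nonempty : K.Nonempty := ⟨1, zero_le_one, by simp, antitone_const⟩
  have K_mapsTo : MapsTo (ulamOp T k) K K := fun v ⟨hv, hsum, hanti⟩ =>
    ⟨ulamOp_nonneg hv, (sum_ulamOp hT.aemeasurable hT.ae_map_mem_Ico v).trans hsum,
      hT.antitone_ulamOp hanti hv⟩
  obtain ⟨v, ⟨hv, hsum, hanti⟩, hfix⟩ := exists_mem_apply_eq_self_of_isCompact_of_convex
    (ulamOp T k).toContinuousLinearMap K_compact K_convex K_nonempty K_mapsTo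
  exact ⟨v, hfix, hv, hsum, hanti⟩

theorem antitone_of_ulamOp_eq_self [Finite ι] (hexp : ∀ i, p i = 0 → 1 < e i)
    (hw : ulamOp T k w = w) (hsum : ∑ i, w i = k) : Antitone w := by
  obtain ⟨v, hv, -, hv_sum, hv_anti⟩ := hT.exists_antitone_ulamOp_eq_self (k := k)
  have w_eq : w = v := eq_of_map_eq_self_of_sum_eq (fun _ => ulamOp_nonneg)
    (sum_ulamOp hT.aemeasurable hT.ae_map_mem_Ico)
    (fun _ => hT.eq_zero_of_ulamOp_eq_self hexp) hw hv (hsum.trans hv_sum.symm)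
  rwa [w_eq]

variable [Fintype ι] [DecidableEq ι] {s : Finset ι} {D δ : ℝ} (hs : ∀ i ∈ s, 0 < p i)
  (hD : ∑ i ∈ s, 1 / (p i * e i) ≤ D) (hδ : ∑ i ∈ sᶜ, 1 / e i ≤ δ) (hδ_lt : δ < 1)
include hs hδ hδ_lt

theorem one_lt_of_left_eq_zero (i : ι) (hi : p i = 0) : 1 < e i := by
  have hi_mem : i ∈ sᶜ := Finset.mem_compl.2 fun h => (hs i h).ne' hi
  have inv_le : 1 / e i ≤ δ := le_trans
    (Finset.single_le_sum (f := fun i => 1 / e i)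
      (fun j _ => one_div_nonneg.2 (hT.branch j).deriv_pos.le) hi_mem) hδ
  exact (div_lt_one (hT.branch i).deriv_pos).1 (inv_le.trans_lt hδ_lt)

include hD

theorem zero_apply_le_of_antitone (hw : ulamOp T k w = w) (hw_nonneg : 0 ≤ w)
    (hsum : ∑ i, w i = k) (hw_anti : Antitone w) : w 0 ≤ D / (1 - δ) := by
  have hk : (k : ℝ) ≠ 0 := Nat.cast_ne_zero.2 (NeZero.ne k)
  have density_le {i : ι} (hi : i ∈ s) : stepFun w (p i) ≤ 1 / p i := by
    have := mul_le_integral_of_antitoneOn (integrable_stepFun w) (antitoneOn_stepFun hw_anti)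
      (fun x _ => stepFun_nonneg hw_nonneg x) (hT.left_mem_Ico i)
    rw [le_div_iff₀' (hs i hi)]
    rwa [integral_stepFun, hsum, div_self hk] at this
  have density_le_zero (i : ι) : stepFun w (p i) ≤ w 0 := by
    obtain ⟨j, hj⟩ := exists_mem_Jint (k := k) (hT.left_mem_Ico i)
    rw [stepFun_apply_of_mem hj]
    exact hw_anti (Fin.zero_le j)
  have self_bound : w 0 ≤ D + δ * w 0 :=
    calc w 0 = ulamOp T k w 0 := by rw [hw]
      _ ≤ ∑ i, stepFun w (p i) / e i := hT.ulamOp_zero_le hw_anti hw_nonneg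
      _ = ∑ i ∈ s, stepFun w (p i) / e i + ∑ i ∈ sᶜ, stepFun w (p i) / e i :=
        (Finset.sum_add_sum_compl s _).symm
      _ ≤ ∑ i ∈ s, 1 / (p i * e i) + ∑ i ∈ sᶜ, 1 / e i * w 0 := by
        refine add_le_add (Finset.sum_le_sum fun i hi => ?_) (Finset.sum_le_sum fun i _ => ?_)
        · rw [← div_div]
          exact div_le_div_of_nonneg_right (density_le hi) (hT.branch i).deriv_pos.le
        · rw [one_div_mul_eq_div]
          exact div_le_div_of_nonneg_right (density_le_zero i) (hT.branch i).deriv_pos.le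
      _ ≤ D + δ * w 0 := by
        rw [← Finset.sum_mul]
        exact add_le_add hD (mul_le_mul_of_nonneg_right hδ (hw_nonneg 0))
  rw [le_div_iff₀ (sub_pos.2 hδ_lt)]
  linarith

theorem apply_le_of_ulamOp_eq_self (hw : ulamOp T k w = w) (hw_nonneg : 0 ≤ w)
    (hsum : ∑ i, w i = k) (i : Fin k) : w i ≤ D / (1 - δ) := by
  have hw_anti := hT.antitone_of_ulamOp_eq_self (hT.one_lt_of_left_eq_zero hs hδ hδ_lt) hw hsum
  exact (hw_anti (Fin.zero_le i)).trans
    (hT.zero_apply_le_of_antitone hs hD hδ hδ_lt hw hw_nonneg hsum hw_anti)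

end PiecewiseConvex

end SupBound

section WeakLimit

theorem measureReal_eq_zero_of_ae_mem_of_disjoint {α : Type*} {_ : MeasurableSpace α}
    {μ : Measure α} {s t : Set α} (hμ : ∀ᵐ x ∂μ, x ∈ t) (hst : Disjoint s t) : μ.real s = 0 := by
  rw [measureReal_def, measure_mono_null (disjoint_left.1 hst) hμ, ENNReal.toReal_zero]

theorem disjoint_Jint_Ico {k m : ℕ} [NeZero k] (hm : k ≤ m) : Disjoint (Jint k m) (Ico 0 1) := by
  refine disjoint_left.2 fun x hx hx' => hx'.2.not_ge (le_trans ?_ hx.1)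
  rw [one_le_div (Nat.cast_pos.2 (NeZero.pos k))]
  exact_mod_cast hm

section Grid

variable {k : ℕ} {μ ν : Measure ℝ} [IsFiniteMeasure μ] [IsFiniteMeasure ν]

theorem measureReal_Iio_succ_div (m : ℕ) :
    μ.real (Iio (((m : ℝ) + 1) / k)) = μ.real (Iio ((m : ℝ) / k)) + μ.real (Jint k m) := by
  have disjoint : Disjoint (Iio ((m : ℝ) / k)) (Jint k m) :=
    disjoint_left.2 fun x hx hx' => hx.not_ge hx'.1
  rw [← measureReal_union disjoint (measurableSet_Jint m), Jint,
    Iio_union_Ico_eq_Iio (by gcongr; linarith)]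

variable [NeZero k] (hμ : ∀ᵐ x ∂μ, x ∈ Ico (0 : ℝ) 1) (hν : ∀ᵐ x ∂ν, x ∈ Ico (0 : ℝ) 1)
include hμ hν

theorem measureReal_Iio_div_eq (h : ∀ i : Fin k, μ.real (Jint k i) = ν.real (Jint k i)) (m : ℕ) :
    μ.real (Iio ((m : ℝ) / k)) = ν.real (Iio ((m : ℝ) / k)) := by
  have eq_of_disjoint {S : Set ℝ} (hS : Disjoint S (Ico 0 1)) : μ.real S = ν.real S := by
    rw [measureReal_eq_zero_of_ae_mem_of_disjoint hμ hS,
      measureReal_eq_zero_of_ae_mem_of_disjoint hν hS]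
  induction m with
  | zero =>
    rw [Nat.cast_zero, zero_div]
    exact eq_of_disjoint (disjoint_left.2 fun x hx hx' => hx.not_ge hx'.1)
  | succ m ih =>
    rw [Nat.cast_add_one, measureReal_Iio_succ_div, measureReal_Iio_succ_div, ih]
    congr 1
    obtain hm | hm := lt_or_ge m k
    · exact h ⟨m, hm⟩
    · exact eq_of_disjoint (disjoint_Jint_Ico hm)

theorem measureReal_Iic_le_add (h : ∀ i : Fin k, μ.real (Jint k i) = ν.real (Jint k i)) {R : ℝ}
    (hR : ∀ i : Fin k, ν.real (Jint k i) ≤ R) (c : ℝ) : μ.real (Iic c) ≤ ν.real (Iic c) + R := by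
  have R_nonneg : 0 ≤ R := measureReal_nonneg.trans (hR 0)
  obtain hc | hc := lt_or_ge c 0
  · have disjoint : Disjoint (Iic c) (Ico 0 1) :=
      disjoint_left.2 fun x hx hx' => hc.not_ge (hx'.1.trans hx)
    rw [measureReal_eq_zero_of_ae_mem_of_disjoint hμ disjoint]
    positivity
  set m := ⌊k * c⌋₊ with hm
  have cell_le : ν.real (Jint k m) ≤ R := by
    obtain hmk | hmk := lt_or_ge m k
    · exact hR ⟨m, hmk⟩
    · rwa [measureReal_eq_zero_of_ae_mem_of_disjoint hν (disjoint_Jint_Ico hmk)]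
  have hc_mem : c ∈ Jint k m := (mem_Jint_iff hc).2 hm.symm
  calc μ.real (Iic c)
      ≤ μ.real (Iio (((m + 1 : ℕ) : ℝ) / k)) :=
        measureReal_mono (Iic_subset_Iio.2 (by exact_mod_cast hc_mem.2))
    _ = ν.real (Iio ((m : ℝ) / k)) + ν.real (Jint k m) := by
        rw [measureReal_Iio_div_eq hμ hν h, Nat.cast_add_one, measureReal_Iio_succ_div]
    _ ≤ ν.real (Iic c) + R :=
        add_le_add (measureReal_mono (Iio_subset_Iic hc_mem.1)) cell_le

end Grid

theorem measureReal_withDensity_ofReal {α : Type*} {_ : MeasurableSpace α} {μ : Measure α}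
    [SFinite μ] {f : α → ℝ} (hf : Integrable f μ) (hf_nonneg : 0 ≤ᵐ[μ] f) (s : Set α) :
    (μ.withDensity fun x => ENNReal.ofReal (f x)).real s = ∫ x in s, f x ∂μ := by
  rw [measureReal_def, withDensity_apply', ← ofReal_integral_eq_lintegral_ofReal hf.integrableOn
    (ae_restrict_of_ae hf_nonneg), ENNReal.toReal_ofReal]
  exact integral_nonneg_of_ae (ae_restrict_of_ae hf_nonneg)

theorem abs_setIntegral_preimage_Iic_sub_le_of_ulamOp_eq_self {T : ℝ → ℝ} {k : ℕ} [NeZero k]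
    {w : Fin k → ℝ} {M : ℝ} (hT : AEMeasurable T lam) (hT_mem : ∀ᵐ x ∂lam, T x ∈ Ico (0 : ℝ) 1)
    (hw : ulamOp T k w = w) (hw_nonneg : 0 ≤ w) (hw_le : ∀ i, w i ≤ M) (c : ℝ) :
    |∫ x in T ⁻¹' Iic c, stepFun w x ∂lam - ∫ x in Iic c, stepFun w x ∂lam| ≤ M / k := by
  have hk : (0 : ℝ) < k := Nat.cast_pos.2 (NeZero.pos k)
  let μ := lam.withDensity fun x => ENNReal.ofReal (stepFun w x)
  have : IsFiniteMeasure μ := isFiniteMeasure_withDensity_ofReal (integrable_stepFun w).2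
  have μ_ac : μ ≪ lam := withDensity_absolutelyContinuous _ _
  have hT' : AEMeasurable T μ := hT.mono_ac μ_ac
  have μ_real (S : Set ℝ) : μ.real S = ∫ x in S, stepFun w x ∂lam :=
    measureReal_withDensity_ofReal (integrable_stepFun w)
      (Eventually.of_forall (stepFun_nonneg hw_nonneg)) S
  have map_real {S : Set ℝ} (hS : MeasurableSet S) : (μ.map T).real S = μ.real (T ⁻¹' S) :=
    map_measureReal_apply_of_aemeasurable hT' hS
  have cell_real (i : Fin k) : μ.real (Jint k i) = w i / k := by
    rw [μ_real, setIntegral_Jint_stepFun]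
  have map_cell_real (i : Fin k) : (μ.map T).real (Jint k i) = w i / k := by
    rw [map_real (measurableSet_Jint i), μ_real, ← congrFun hw i, ulamOp_apply,
      mul_div_cancel_left₀ _ hk.ne']
  have cell_le (i : Fin k) : w i / k ≤ M / k := by gcongr; exact hw_le i
  have μ_mem : ∀ᵐ x ∂μ, x ∈ Ico (0 : ℝ) 1 := μ_ac.ae_le ae_mem_Ico_lam
  have map_mem : ∀ᵐ x ∂μ.map T, x ∈ Ico (0 : ℝ) 1 :=
    (ae_map_iff hT' measurableSet_Ico).2 (μ_ac.ae_le hT_mem)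
  rw [← μ_real, ← μ_real, ← map_real measurableSet_Iic, abs_sub_le_iff]
  constructor <;> rw [sub_le_iff_le_add']
  · exact measureReal_Iic_le_add map_mem μ_mem (fun i => by rw [map_cell_real, cell_real])
      (fun i => (cell_real i).trans_le (cell_le i)) c
  · exact measureReal_Iic_le_add μ_mem map_mem (fun i => by rw [map_cell_real, cell_real])
      (fun i => (map_cell_real i).trans_le (cell_le i)) c

end WeakLimit

section WeakConvergence

variable {α : Type*} {_ : MeasurableSpace α} {μ : Measure α} {β : Type*} {l : Filter β}
  {f : β → α → ℝ} {g : α → ℝ}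
  (h : ∀ φ : α → ℝ, Measurable φ → (∀ x, |φ x| ≤ 1) →
    Tendsto (fun j => ∫ x, φ x * f j x ∂μ) l (𝓝 (∫ x, φ x * g x ∂μ)))
include h

theorem tendsto_setIntegral_of_tendsto_integral_mul {s : Set α} (hs : NullMeasurableSet s μ) :
    Tendsto (fun j => ∫ x in s, f j x ∂μ) l (𝓝 (∫ x in s, g x ∂μ)) := by
  obtain ⟨t, -, ht, hts⟩ := hs.exists_measurable_superset_ae_eq
  have integral_eq (u : α → ℝ) : ∫ x, t.indicator 1 x * u x ∂μ = ∫ x in s, u x ∂μ := by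
    rw [← setIntegral_congr_set hts, ← integral_indicator ht]
    exact integral_congr_ae <| Eventually.of_forall fun x => by
      by_cases hx : x ∈ t <;> simp only [hx, indicator_of_mem, indicator_of_notMem, not_false_iff,
        Pi.one_apply, one_mul, zero_mul]
  simp only [← integral_eq]
  refine h _ (measurable_one.indicator ht) fun x => ?_
  rw [← Real.norm_eq_abs]
  exact (norm_indicator_le_norm_self _ x).trans (by simp)

theorem ae_nonneg_of_tendsto_integral_mul [l.NeBot] (hg : Integrable g μ) (hf : ∀ j, 0 ≤ᵐ[μ] f j) :
    0 ≤ᵐ[μ] g :=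
  ae_nonneg_of_forall_setIntegral_nonneg hg fun _ hs _ =>
    ge_of_tendsto (tendsto_setIntegral_of_tendsto_integral_mul h hs.nullMeasurableSet) <|
      Eventually.of_forall fun j => integral_nonneg_of_ae (ae_restrict_of_ae (hf j))

end WeakConvergence

theorem withDensity_preimage_eq_of_setIntegral_Iic {μ : Measure ℝ} [SFinite μ] {T g : ℝ → ℝ}
    (hT : AEMeasurable T μ) (hg : Integrable g μ) (hg_nonneg : 0 ≤ᵐ[μ] g)
    (h : ∀ c, ∫ x in T ⁻¹' Iic c, g x ∂μ = ∫ x in Iic c, g x ∂μ) {A : Set ℝ}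
    (hA : MeasurableSet A) :
    μ.withDensity (fun x => ENNReal.ofReal (g x)) (T ⁻¹' A) =
      μ.withDensity (fun x => ENNReal.ofReal (g x)) A := by
  set ν := μ.withDensity fun x => ENNReal.ofReal (g x)
  have : IsFiniteMeasure ν := isFiniteMeasure_withDensity_ofReal hg.2
  have hT' : AEMeasurable T ν := hT.mono_ac (withDensity_absolutelyContinuous _ _)
  have map_eq : ν.map T = ν := Measure.ext_of_Iic _ _ fun c => by
    rw [← measureReal_eq_measureReal_iff, map_measureReal_apply_of_aemeasurable hT'
      measurableSet_Iic, measureReal_withDensity_ofReal hg hg_nonneg,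
      measureReal_withDensity_ofReal hg hg_nonneg, h]
  rw [← Measure.map_apply_of_aemeasurable hT' hA, map_eq]

namespace PiecewiseConvex

variable {ι : Type*} [Fintype ι] [DecidableEq ι] {T : ℝ → ℝ} {p q e : ι → ℝ}
  (hT : PiecewiseConvex T p q e) {s : Finset ι} {D δ : ℝ} (hs : ∀ i ∈ s, 0 < p i)
  (hD : ∑ i ∈ s, 1 / (p i * e i) ≤ D) (hδ : ∑ i ∈ sᶜ, 1 / e i ≤ δ) (hδ_lt : δ < 1)
include hT hs hD hδ hδ_lt

theorem esssup_le {k : ℕ} [NeZero k] {f : ℝ → ℝ} (hf : IsUlamFixed T k f) :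
    esssup f ≤ ENNReal.ofReal (D / (1 - δ)) := by
  obtain ⟨w, hw, hw_nonneg, hsum, hfw⟩ := hf.exists_ulamOp_eq_self
  refine essSup_le_of_ae_le _ ?_
  filter_upwards [hfw, ae_mem_Ico_lam] with x hx hx_mem
  obtain ⟨i, hi⟩ := exists_mem_Jint (k := k) hx_mem
  rw [hx, stepFun_apply_of_mem hi]
  exact ENNReal.ofReal_le_ofReal
    (hT.apply_le_of_ulamOp_eq_self hs hD hδ hδ_lt hw hw_nonneg hsum i)

theorem abs_setIntegral_preimage_Iic_sub_le {k : ℕ} [NeZero k] {f : ℝ → ℝ}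
    (hf : IsUlamFixed T k f) (c : ℝ) :
    |∫ x in T ⁻¹' Iic c, f x ∂lam - ∫ x in Iic c, f x ∂lam| ≤ D / (1 - δ) / k := by
  obtain ⟨w, hw, hw_nonneg, hsum, hfw⟩ := hf.exists_ulamOp_eq_self
  have integral_eq (S : Set ℝ) : ∫ x in S, f x ∂lam = ∫ x in S, stepFun w x ∂lam :=
    integral_congr_ae (ae_restrict_of_ae hfw)
  rw [integral_eq, integral_eq]
  exact abs_setIntegral_preimage_Iic_sub_le_of_ulamOp_eq_self hT.aemeasurable hT.ae_map_mem_Ico hw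
    hw_nonneg (hT.apply_le_of_ulamOp_eq_self hs hD hδ hδ_lt hw hw_nonneg hsum) c

theorem setIntegral_preimage_Iic_eq_of_tendsto {f : ℕ → ℝ → ℝ} {g : ℝ → ℝ} {ks : ℕ → ℕ}
    (hks : Tendsto ks atTop atTop) (hks_pos : ∀ j, 1 ≤ ks j)
    (hf : ∀ j, IsUlamFixed T (ks j) (f j))
    (h : ∀ φ : ℝ → ℝ, Measurable φ → (∀ x, |φ x| ≤ 1) →
      Tendsto (fun j => ∫ x, φ x * f j x ∂lam) atTop (𝓝 (∫ x, φ x * g x ∂lam))) (c : ℝ) :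
    ∫ x in T ⁻¹' Iic c, g x ∂lam = ∫ x in Iic c, g x ∂lam := by
  have diff_tendsto := (tendsto_setIntegral_of_tendsto_integral_mul h
    (hT.aemeasurable.nullMeasurableSet_preimage (measurableSet_Iic (a := c)))).sub
    (tendsto_setIntegral_of_tendsto_integral_mul h (measurableSet_Iic (a := c)).nullMeasurableSet)
  have bound_tendsto : Tendsto (fun j => D / (1 - δ) / (ks j : ℝ)) atTop (𝓝 0) :=
    tendsto_const_nhds.div_atTop (tendsto_natCast_atTop_atTop.comp hks)
  refine sub_eq_zero.1 (tendsto_nhds_unique diff_tendsto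
    (squeeze_zero_norm (fun j => ?_) bound_tendsto))
  have : NeZero (ks j) := NeZero.of_pos (hks_pos j)
  exact hT.abs_setIntegral_preimage_Iic_sub_le hs hD hδ hδ_lt (hf j) c

end PiecewiseConvex

namespace PCApprox

variable {τ : ℝ → ℝ} {a d : ℕ → ℝ} {N : ℕ} (hτ : PCApprox τ a d N)
include hτ

theorem a_pos (m : ℕ) : 0 < a m :=
  (hτ.a_anti.antitone.le_of_tendsto hτ.a_lim (m + 1)).trans_lt (hτ.a_anti m.lt_succ_self)

theorem a_le_one (m : ℕ) : a m ≤ 1 := hτ.a_zero ▸ hτ.a_anti.antitone m.zero_le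

theorem isConvexBranch (m : ℕ) : IsConvexBranch τ (a (m + 1)) (a m) (d (m + 1)) :=
  ⟨hτ.a_anti m.lt_succ_self, hτ.cont m, hτ.conv m, hτ.map_a m, hτ.deriv_a m, hτ.d_pos m⟩

theorem isConvexBranch_tauN_zero (n : ℕ) : IsConvexBranch (tauN τ a n) 0 (a n) (1 / a n) := by
  have eqOn : EqOn (tauN τ a n) (fun x => 1 / a n * x) (Ico 0 (a n)) := fun x hx =>
    (if_pos hx.2).trans (one_div_mul_eq_div (a n) x).symm
  have zero_mem : (0 : ℝ) ∈ Ico 0 (a n) := left_mem_Ico.2 (hτ.a_pos n)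
  have eventuallyEq : tauN τ a n =ᶠ[𝓝[≥] 0] fun x => 1 / a n * x :=
    eqOn.eventuallyEq_of_mem (Ico_mem_nhdsGE (hτ.a_pos n))
  refine ⟨hτ.a_pos n, ContinuousOn.congr (by fun_prop) eqOn, ?_, ?_, ?_,
    one_div_pos.2 (hτ.a_pos n)⟩
  · exact ((convexOn_id (convex_Ico 0 (a n))).smul (one_div_nonneg.2 (hτ.a_pos n).le)).congr
      eqOn.symm
  · exact (eqOn zero_mem).trans (mul_zero _)
  · refine HasDerivWithinAt.congr_of_eventuallyEq ?_ eventuallyEq (eqOn zero_mem)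
    simpa using (hasDerivWithinAt_id (0 : ℝ) (Ici 0)).const_mul (1 / a n)

theorem isConvexBranch_tauN_succ {m n : ℕ} (hmn : m < n) :
    IsConvexBranch (tauN τ a n) (a (m + 1)) (a m) (d (m + 1)) := by
  have le_left : a n ≤ a (m + 1) := hτ.a_anti.antitone hmn
  have eqOn : EqOn (tauN τ a n) τ (Ici (a n)) := fun x hx => if_neg (not_lt.2 hx)
  have h := hτ.isConvexBranch m
  have eqOn_Ico : EqOn (tauN τ a n) τ (Ico (a (m + 1)) (a m)) :=
    eqOn.mono fun x hx => le_left.trans hx.1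
  exact ⟨h.lt, h.continuousOn.congr eqOn_Ico, h.convexOn.congr eqOn_Ico.symm,
    (eqOn le_left).trans h.map_left,
    h.hasDerivWithinAt.congr (eqOn.mono (Ici_subset_Ici.2 le_left)) (eqOn le_left), h.deriv_pos⟩

theorem Ico_union_iUnion_Ico (n : ℕ) :
    Ico 0 (a n) ∪ ⋃ m : Fin n, Ico (a (m + 1)) (a m) = Ico 0 1 := by
  refine (union_subset (Ico_subset_Ico_right (hτ.a_le_one n)) (iUnion_subset fun m : Fin n =>
    Ico_subset_Ico (hτ.a_pos _).le (hτ.a_le_one m))).antisymm fun x hx => ?_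
  obtain hxn | hnx := lt_or_ge x (a n)
  · exact Or.inl ⟨hx.1, hxn⟩
  have hex : ∃ m, a m ≤ x := ⟨n, hnx⟩
  classical
  have find_pos : 0 < Nat.find hex := by
    rw [Nat.find_pos, hτ.a_zero]
    exact hx.2.not_ge
  obtain ⟨m, hm⟩ := Nat.exists_eq_add_one.2 find_pos
  have hmn : m < n := Nat.lt_of_succ_le (hm.symm.trans_le (Nat.find_min' hex hnx))
  refine Or.inr (mem_iUnion.2 ⟨⟨m, hmn⟩, hm ▸ Nat.find_spec hex, ?_⟩)
  exact not_le.1 (Nat.find_min hex (hm ▸ m.lt_succ_self))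

theorem tauN_le_one (n : ℕ) {x : ℝ} (hx : x ∈ Icc (0 : ℝ) 1) : tauN τ a n x ≤ 1 := by
  rw [tauN]
  split_ifs with h
  · exact (div_le_one (hτ.a_pos n)).2 h.le
  · exact (hτ.mapsTo hx).2

theorem piecewiseConvex_tauN (n : ℕ) :
    PiecewiseConvex (tauN τ a n) (fun i : Option (Fin n) => i.elim 0 fun m => a (m + 1))
      (fun i => i.elim (a n) fun m => a m) (fun i => i.elim (1 / a n) fun m => d (m + 1)) where
  branch
    | none => hτ.isConvexBranch_tauN_zero n
    | some m => hτ.isConvexBranch_tauN_succ m.is_lt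
  iUnion_Ico := by
    rw [iUnion_option]
    exact hτ.Ico_union_iUnion_Ico n
  disjoint := by
    have disjoint_zero (m : Fin n) : Disjoint (Ico 0 (a n)) (Ico (a (m + 1)) (a m)) :=
      disjoint_left.2 fun x hx hx' =>
        hx.2.not_ge ((hτ.a_anti.antitone (Nat.succ_le_of_lt m.is_lt)).trans hx'.1)
    rintro (_ | i) (_ | j) hij
    · exact (hij rfl).elim
    · exact disjoint_zero j
    · exact (disjoint_zero i).symm
    · exact hτ.a_anti.antitone.pairwise_disjoint_on_Ico_succ fun h =>
        hij (congrArg some (Fin.ext h))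
  le_one x hx := hτ.tauN_le_one n (Ico_subset_Icc_self hx)

theorem sum_Ico_one_div_le (n : ℕ) : ∑ m ∈ Finset.Ico N n, 1 / d (m + 1) ≤ D₁ d N := by
  rw [Finset.sum_Ico_eq_sum_range]
  simp only [add_comm N]
  exact ((summable_nat_add_iff N).2 hτ.sum_d).sum_le_tsum _ fun m _ =>
    one_div_nonneg.2 (hτ.d_pos _).le

end PCApprox

/-- The branches of `τ_n` on `[a (m + 1), a m)` for `m < N`, among all its branches: these are the
ones summed over in `Dconst`. -/
def mainBranches {N n : ℕ} (hn : N ≤ n) : Finset (Option (Fin n)) :=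
  Finset.univ.map ((Fin.castLEEmb hn).trans .some)

section MainBranches

variable {N n : ℕ} (hn : N ≤ n)

theorem exists_eq_some_of_mem_mainBranches {i : Option (Fin n)} (hi : i ∈ mainBranches hn) :
    ∃ m : Fin n, i = some m := by
  obtain ⟨m, -, rfl⟩ := Finset.mem_map.1 hi
  exact ⟨_, rfl⟩

variable {G : Option (Fin n) → ℝ} {g : ℕ → ℝ} (hG : ∀ m : Fin n, G (some m) = g m)
include hG

theorem sum_mainBranches : ∑ i ∈ mainBranches hn, G i = ∑ m ∈ Finset.range N, g m := by
  rw [mainBranches, Finset.sum_map, Finset.sum_range]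
  exact Finset.sum_congr rfl fun m _ => hG (Fin.castLE hn m)

theorem sum_compl_mainBranches :
    ∑ i ∈ (mainBranches hn)ᶜ, G i = G none + ∑ m ∈ Finset.Ico N n, g m := by
  have split := Finset.sum_add_sum_compl (mainBranches hn) G
  simp only [sum_mainBranches hn hG, Fintype.sum_option, hG] at split
  rw [← Finset.sum_range (n := n) g, ← Finset.sum_range_add_sum_Ico g hn, add_left_comm] at split
  exact add_left_cancel split

end MainBranches

namespace PCApprox

variable {τ : ℝ → ℝ} {a d : ℕ → ℝ} {N n : ℕ} (hτ : PCApprox τ a d N) (hn : N ≤ n)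
include hτ

theorem left_pos_of_mem_mainBranches {i : Option (Fin n)} (hi : i ∈ mainBranches hn) :
    0 < i.elim 0 fun m => a (m + 1) := by
  obtain ⟨m, rfl⟩ := exists_eq_some_of_mem_mainBranches hn hi
  exact hτ.a_pos (m + 1)

theorem sum_compl_mainBranches_one_div_le :
    ∑ i ∈ (mainBranches hn)ᶜ, 1 / i.elim (1 / a n) (fun m => d (m + 1)) ≤ a n + D₁ d N := by
  rw [sum_compl_mainBranches hn (g := fun m => 1 / d (m + 1)) fun _ => rfl, Option.elim_none,
    one_div_one_div]
  exact add_le_add_right (hτ.sum_Ico_one_div_le n) _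

end PCApprox

theorem stmt15_general {ι : Type*} [Fintype ι] [DecidableEq ι] {T : ℝ → ℝ} {p q e : ι → ℝ}
    (hT : PiecewiseConvex T p q e) {s : Finset ι} {D δ : ℝ} (hs : ∀ i ∈ s, 0 < p i)
    (hD : ∑ i ∈ s, 1 / (p i * e i) ≤ D) (hδ : ∑ i ∈ sᶜ, 1 / e i ≤ δ) (hδ_lt : δ < 1)
    {f : ℕ → ℝ → ℝ} (hf : ∀ k, 1 ≤ k → IsUlamFixed T k (f k)) :
    (∀ k, 1 ≤ k → esssup (f k) ≤ ENNReal.ofReal (D / (1 - δ))) ∧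
    ∀ (g : ℝ → ℝ) (ks : ℕ → ℕ), Integrable g lam → Tendsto ks atTop atTop → (∀ j, 1 ≤ ks j) →
      (∀ φ : ℝ → ℝ, Measurable φ → (∀ x, |φ x| ≤ 1) →
        Tendsto (fun j => ∫ x, φ x * f (ks j) x ∂lam) atTop (𝓝 (∫ x, φ x * g x ∂lam))) →
      ∀ A : Set ℝ, MeasurableSet A →
        lam.withDensity (fun x => ENNReal.ofReal (g x)) (T ⁻¹' A) =
          lam.withDensity (fun x => ENNReal.ofReal (g x)) A := by
  refine ⟨fun k hk => ?_, fun g ks hg hks hks_pos hweak A hA => ?_⟩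
  · have : NeZero k := NeZero.of_pos hk
    exact hT.esssup_le hs hD hδ hδ_lt (hf k hk)
  · have hfix (j : ℕ) := hf (ks j) (hks_pos j)
    have g_nonneg : 0 ≤ᵐ[lam] g := ae_nonneg_of_tendsto_integral_mul hweak hg fun j =>
      (ae_restrict_mem measurableSet_Icc).mono (hfix j).2.2.1
    exact withDensity_preimage_eq_of_setIntegral_Iic hT.aemeasurable hg g_nonneg
      (hT.setIntegral_preimage_Iic_eq_of_tendsto hs hD hδ hδ_lt hks hks_pos hfix hweak) hA

/-- Fix `n ≥ N` with `a n + D₁ < 1` and for each `k ≥ 1` let `f k` be a normalized fixed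
point of the Ulam operator `P^{(k)}_{τ_n}`. Then `sup_k ess sup (f k) ≤ D/(1 − (a n + D₁))`
(whence the sequence is weakly pre-compact in `L¹`); and if a subsequence `f (ks j)`
converges weakly in `L¹` to an integrable `flim`, then `flim` is a fixed point of
`P_{τ_n}`, i.e. the measure `flim·λ` is `τ_n`-invariant. -/
theorem stmt15 (τ : ℝ → ℝ) (a d : ℕ → ℝ) (N : ℕ)
    (hτ : PCApprox τ a d N) (n : ℕ) (hn : N ≤ n) (hcontr : a n + D₁ d N < 1)
    (f : ℕ → ℝ → ℝ)
    (hfix : ∀ k : ℕ, 1 ≤ k → IsUlamFixed (tauN τ a n) k (f k)) :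
    (∀ k : ℕ, 1 ≤ k →
      esssup (f k) ≤ ENNReal.ofReal (Dconst a d N / (1 - (a n + D₁ d N)))) ∧
    (∀ (flim : ℝ → ℝ) (ks : ℕ → ℕ), MeasureTheory.Integrable flim lam →
      StrictMono ks → (∀ j, 1 ≤ ks j) →
      (∀ φ : ℝ → ℝ, Measurable φ → (∃ K : ℝ, ∀ x ∈ Set.Icc (0:ℝ) 1, |φ x| ≤ K) →
        Filter.Tendsto (fun j => ∫ x, φ x * f (ks j) x ∂lam) Filter.atTop
          (nhds (∫ x, φ x * flim x ∂lam))) →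
      ∀ A : Set ℝ, MeasurableSet A → A ⊆ Set.Icc (0:ℝ) 1 →
        lam.withDensity (fun x => ENNReal.ofReal (flim x)) ((tauN τ a n) ⁻¹' A) =
        lam.withDensity (fun x => ENNReal.ofReal (flim x)) A) := by
  obtain ⟨esssup_le, invariant⟩ := stmt15_general (hτ.piecewiseConvex_tauN n)
    (fun _ => hτ.left_pos_of_mem_mainBranches hn)
    (sum_mainBranches hn (g := fun m => 1 / (a (m + 1) * d (m + 1))) fun _ => rfl).le
    (hτ.sum_compl_mainBranches_one_div_le hn) hcontr hfix
  exact ⟨esssup_le, fun flim ks hflim hks hks_pos hweak A hA _ =>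
    invariant flim ks hflim hks.tendsto_atTop hks_pos
      (fun φ hφ hφ_le => hweak φ hφ ⟨1, fun x _ => hφ_le x⟩) A hA⟩
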